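/- Let f : ℝ² → ℝ be totally differentiable at P = (x₀, y₀) with total derivative J (a 1×2 matrix). Let 0 < p < 1 and let (Aₖ), (Bₖ) be sequences of points in ℝ² with Aₖ ≠ P and Bₖ ≠ P, Aₖ → P, Bₖ → P, and sin θₖ ≥ p for all k, where θₖ is the angle between Aₖ − P and Bₖ − P. Then the secant-plane coefficient row vectors [f(Aₖ) − f(P), f(Bₖ) − f(P)] · Mₖ⁻¹ converge to J as k → ∞, where Mₖ is the 2×2 matrix with columns Aₖ − P and Bₖ − P. -/

import Mathlib

/-!
Write `u = A - P`, `v = B - P` and let `a`, `b` be the first-order Taylor errors of `f` at `A`, `B`.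
Since `[J u, J v] = J · M`, the secant coefficients differ from `J` by exactly `[a, b] · M⁻¹`.
By Cramer's rule the entries of this error are `(a v₁ - b u₁) / det M` and `(b u₀ - a v₀) / det M`,
and `|det M| = ‖u‖ ‖v‖ sin θ ≥ p ‖u‖ ‖v‖` (`abs_det_colMatrix`), so each is at most
`(|a| / ‖u‖ + |b| / ‖v‖) / p` (`abs_secantCoeff_sub_le`). Differentiability says precisely that
both quotients tend to zero.
-/

open Matrix Filter InnerProductGeometry Real

/-- The 2×2 matrix with columns `u` and `v`. -/
noncomputable def colMatrix (u v : EuclideanSpace ℝ (Fin 2)) : Matrix (Fin 2) (Fin 2) ℝ :=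
  !![u 0, v 0; u 1, v 1]

/-- The secant-plane coefficient row vector of `f` at `P` through `A` and `B`:
`[f(A) − f(P), f(B) − f(P)] · M⁻¹` where `M` has columns `A − P` and `B − P`. -/
noncomputable def secantCoeff (f : EuclideanSpace ℝ (Fin 2) → ℝ)
    (P A B : EuclideanSpace ℝ (Fin 2)) : Fin 2 → ℝ :=
  ![f A - f P, f B - f P] ᵥ* (colMatrix (A - P) (B - P))⁻¹

lemma abs_det_colMatrix (u v : EuclideanSpace ℝ (Fin 2)) :
    |u 0 * v 1 - v 0 * u 1| = Real.sin (angle u v) * (‖u‖ * ‖v‖) := by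
  rw [sin_angle_mul_norm_mul_norm, ← Real.sqrt_sq_eq_abs]
  congr 1
  simp only [PiLp.inner_apply, Fin.sum_univ_two, RCLike.inner_apply, conj_trivial]
  ring

lemma map_eq_coord (J : EuclideanSpace ℝ (Fin 2) →L[ℝ] ℝ) (u : EuclideanSpace ℝ (Fin 2)) :
    J u = u 0 * J (EuclideanSpace.single 0 1) + u 1 * J (EuclideanSpace.single 1 1) := by
  have h : u = u 0 • EuclideanSpace.single 0 (1 : ℝ) + u 1 • EuclideanSpace.single 1 (1 : ℝ) := by
    ext i; fin_cases i <;> simp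
  conv_lhs => rw [h]
  simp

/-- The entries of the error term `[a, b] · M⁻¹`, as given by Cramer's rule, are bounded by the
relative Taylor errors: `w`, `z` stand for entries of `v`, `u`, and `s`, `r` for the norms
`‖v‖`, `‖u‖`. -/
lemma abs_cramer_le {a b w z d r s p : ℝ} (hp : 0 < p) (hr : 0 < r) (hs : 0 < s)
    (hd : p * (r * s) ≤ |d|) (hw : |w| ≤ s) (hz : |z| ≤ r) :
    |(a * w - b * z) / d| ≤ (|a| / r + |b| / s) / p := by
  have hnum : |a * w - b * z| ≤ |a| * s + |b| * r := by
    refine (abs_sub _ _).trans ?_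
    rw [abs_mul, abs_mul]
    gcongr
  calc |(a * w - b * z) / d| = |a * w - b * z| / |d| := abs_div _ _
    _ ≤ (|a| * s + |b| * r) / (p * (r * s)) := by gcongr
    _ = (|a| / r + |b| / s) / p := by field_simp

lemma abs_secantCoeff_sub_le (f : EuclideanSpace ℝ (Fin 2) → ℝ) (P A B : EuclideanSpace ℝ (Fin 2))
    (J : EuclideanSpace ℝ (Fin 2) →L[ℝ] ℝ) {p : ℝ} (hp : 0 < p) (hA : A ≠ P) (hB : B ≠ P)
    (hangle : p ≤ Real.sin (angle (A - P) (B - P))) (i : Fin 2) :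
    |secantCoeff f P A B i - ![J (EuclideanSpace.single 0 1), J (EuclideanSpace.single 1 1)] i| ≤
      (|f A - f P - J (A - P)| / ‖A - P‖ + |f B - f P - J (B - P)| / ‖B - P‖) / p := by
  have hu : 0 < ‖A - P‖ := norm_pos_iff.2 (sub_ne_zero.2 hA)
  have hv : 0 < ‖B - P‖ := norm_pos_iff.2 (sub_ne_zero.2 hB)
  have hJu := map_eq_coord J (A - P)
  have hJv := map_eq_coord J (B - P)
  unfold secantCoeff
  generalize A - P = u at *
  generalize B - P = v at *
  have hd : p * (‖u‖ * ‖v‖) ≤ |u 0 * v 1 - v 0 * u 1| := by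
    rw [abs_det_colMatrix]; gcongr
  have hd0 : u 0 * v 1 - v 0 * u 1 ≠ 0 := abs_pos.1 (lt_of_lt_of_le (by positivity) hd)
  have hcu : ∀ j, |u j| ≤ ‖u‖ := fun j => PiLp.norm_apply_le u j
  have hcv : ∀ j, |v j| ≤ ‖v‖ := fun j => PiLp.norm_apply_le v j
  fin_cases i
  · convert abs_cramer_le (a := f A - f P - J u) (b := f B - f P - J v) hp hu hv hd
      (hcv 1) (hcu 1) using 2
    rw [hJu, hJv, eq_div_iff hd0]
    simp [colMatrix, Matrix.inv_def, Matrix.det_fin_two, Matrix.adjugate_fin_two, vecMul,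
      dotProduct, Fin.sum_univ_two]
    field_simp
    ring
  -- The second entry is written as `(a v₀ - b u₀) / (-det M)` to match the sign pattern of the bound.
  · convert abs_cramer_le (a := f A - f P - J u) (b := f B - f P - J v)
      (d := -(u 0 * v 1 - v 0 * u 1))
      hp hu hv (by rwa [abs_neg]) (hcv 0) (hcu 0) using 2
    rw [hJu, hJv, eq_div_iff (neg_ne_zero.2 hd0)]
    simp [colMatrix, Matrix.inv_def, Matrix.det_fin_two, Matrix.adjugate_fin_two, vecMul,
      dotProduct, Fin.sum_univ_two]
    field_simp
    ring

lemma tendsto_relative_error {f : EuclideanSpace ℝ (Fin 2) → ℝ} {P : EuclideanSpace ℝ (Fin 2)}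
    {J : EuclideanSpace ℝ (Fin 2) →L[ℝ] ℝ} (hf : HasFDerivAt f J P)
    {A : ℕ → EuclideanSpace ℝ (Fin 2)} (hA : Tendsto A atTop (nhds P)) :
    Tendsto (fun k => |f (A k) - f P - J (A k - P)| / ‖A k - P‖) atTop (nhds 0) := by
  have h := (hasFDerivAt_iff_tendsto.1 hf).comp hA
  refine h.congr fun k => ?_
  simp [div_eq_inv_mul]

/-- If `f` is totally differentiable at `P` with total derivative `J`, then for any
`0 < p < 1` and sequences `Aₖ → P`, `Bₖ → P` with `Aₖ, Bₖ ≠ P` and `sin θₖ ≥ p`,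
the secant-plane coefficient row vectors converge to the Jacobian row vector of `J`. -/
theorem secant_coeff_tendsto_of_differentiable
    (f : EuclideanSpace ℝ (Fin 2) → ℝ) (P : EuclideanSpace ℝ (Fin 2))
    (J : EuclideanSpace ℝ (Fin 2) →L[ℝ] ℝ) (hf : HasFDerivAt f J P)
    (p : ℝ) (hp0 : 0 < p) (hp1 : p < 1)
    (A B : ℕ → EuclideanSpace ℝ (Fin 2))
    (hA : ∀ k, A k ≠ P) (hB : ∀ k, B k ≠ P)
    (hAlim : Tendsto A atTop (nhds P)) (hBlim : Tendsto B atTop (nhds P))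
    (hangle : ∀ k, p ≤ Real.sin (angle (A k - P) (B k - P))) :
    Tendsto (fun k => secantCoeff f P (A k) (B k)) atTop
      (nhds ![J (EuclideanSpace.single 0 1), J (EuclideanSpace.single 1 1)]) := by
  rw [tendsto_pi_nhds]
  intro i
  rw [tendsto_iff_norm_sub_tendsto_zero]
  have hbound := ((tendsto_relative_error hf hAlim).add (tendsto_relative_error hf hBlim)).div_const p
  rw [add_zero, zero_div] at hbound
  exact squeeze_zero (fun k => norm_nonneg _)
    (fun k => abs_secantCoeff_sub_le f P (A k) (B k) J hp0 (hA k) (hB k) (hangle k) i) hbound
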